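/- arXiv:1503.01588 — 2 statements merged into one kernel-verified Lean document; each statement's English description precedes it below -/
import Mathlib

section
/- There is a universal constant C > 0 such that the following holds: for every n ≥ 2, every nonempty finite message space M, every one-round protocol Π : (Fin n → M) → Bool, every ε ∈ ℝ with 0 < ε < 1, and every t : ℕ, if Π is ε-secure against t strong adaptive corruptions, then (t : ℝ) ≤ C · Real.sqrt n · (1 + Real.log n + Real.log (1/ε)). -/
/-!
The adversary that moves `r` to a vector with outcome `!b` whenever one lies within distance `t`
leaves outcome `b` exactly on `RobustSet proto b t`. Security therefore makes both robust sets
have density at least `ε`, and they are at Hamming distance more than `t` from each other. The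
theorem is then an instance of concentration of measure on product spaces.

The concentration inequality used is `sum_exp_mul_sum_exp_neg_le`: if `f` is `1`-Lipschitz for the
Hamming distance, then `E[exp (l f)] * E[exp (-l f)] ≤ (cosh l) ^ n`. It tensorizes: with `a x` and
`b x` the two exponential moments of the section of `f` at first coordinate `x`, the induction
hypothesis bounds `a x * b x`, the Lipschitz property bounds the ratios `a x / a x'` by `exp l`,
and symmetrizing `∑ a * ∑ b` over pairs `(x, x')` gives one more factor `cosh l`.

For `f` the distance to `RobustSet proto false t`, the two moments are at least `ε * exp (l t)` and
`ε`, so `ε ^ 2 * exp (l t) ≤ (cosh l) ^ n ≤ exp (n l ^ 2 / 2)`. Taking `l = 1 / √n` gives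
`t ≤ √n * (1 / 2 + 2 * log (1 / ε))`.
-/

/-- The probability that a uniformly random element of a finite type satisfies `P`. -/
noncomputable def Pr {α : Type*} [Fintype α] (P : α → Prop) : ℝ :=
  letI := Classical.decPred P
  ((Finset.univ.filter P).card : ℝ) / Fintype.card α

/-- `RobustSet proto b t` is the set of message vectors `r` such that every vector within
Hamming distance `t` of `r` (including `r` itself) yields outcome `b`. -/
def RobustSet {ι M : Type*} [Fintype ι] [DecidableEq M]
    (proto : (ι → M) → Bool) (b : Bool) (t : ℕ) : Set (ι → M) :=
  {r | ∀ r', hammingDist r r' ≤ t → proto r' = b}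

/-- `proto` is `ε`-secure against `t` strong adaptive corruptions: for every adversary `A`
changing at most `t` coordinates of the honest messages, every outcome occurs with
probability at least `ε` over uniform honest messages. -/
def StrongSecure {ι M : Type*} [Fintype ι] [DecidableEq ι] [Fintype M] [DecidableEq M]
    (proto : (ι → M) → Bool) (t : ℕ) (ε : ℝ) : Prop :=
  ∀ A : (ι → M) → (ι → M), (∀ r, hammingDist r (A r) ≤ t) →
    ∀ b : Bool, ε ≤ Pr (fun r => proto (A r) = b)

lemma hammingDist_cons {M : Type*} [DecidableEq M] {n : ℕ} (x x' : M) (y y' : Fin n → M) :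
    hammingDist (Fin.cons x y : Fin (n + 1) → M) (Fin.cons x' y')
      = (if x ≠ x' then 1 else 0) + hammingDist y y' := by
  unfold hammingDist
  rw [Fin.card_filter_univ_succ]
  by_cases h : x = x'
  · simp [h]
  · simp [h, add_comm]

lemma sum_fin_succ_fun {M : Type*} [Fintype M] {n : ℕ} (F : (Fin (n + 1) → M) → ℝ) :
    ∑ r, F r = ∑ x : M, ∑ y : Fin n → M, F (Fin.cons x y) := by
  rw [← Fintype.sum_prod_type' (fun (x : M) (y : Fin n → M) => F (Fin.cons x y))]
  exact (Fintype.sum_equiv (Fin.consEquiv (fun _ : Fin (n + 1) => M)) _ _ (fun p => rfl)).symm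

/-- The two-point inequality behind the tensorization: since `b ≤ K / a` and `b' ≤ K / a'`, it
reduces to `u + 1 / u ≤ exp l + exp (-l)` for the ratio `u = a / a'` in `[exp (-l), exp l]`. -/
lemma cross_le {a a' b b' K l : ℝ} (ha : 0 < a) (ha' : 0 < a')
    (h : a * b ≤ K) (h' : a' * b' ≤ K) (hK : 0 ≤ K)
    (h1 : a ≤ Real.exp l * a') (h2 : a' ≤ Real.exp l * a) :
    a * b' + a' * b ≤ 2 * (K * Real.cosh l) := by
  have hE := Real.exp_pos l
  have key : a ^ 2 + a' ^ 2 ≤ 2 * Real.cosh l * (a * a') := by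
    rw [Real.cosh_eq, Real.exp_neg]
    have h3 := mul_nonneg (sub_nonneg.2 h1) (sub_nonneg.2 h2)
    have h4 : (2 * ((Real.exp l + (Real.exp l)⁻¹) / 2) * (a * a') - (a ^ 2 + a' ^ 2))
        = (Real.exp l * a' - a) * (Real.exp l * a - a') * (Real.exp l)⁻¹ := by
      field_simp
      ring
    have h5 := mul_nonneg h3 (inv_pos.2 hE).le
    linarith
  have haa := mul_pos ha ha'
  refine le_of_mul_le_mul_left ?_ haa
  calc a * a' * (a * b' + a' * b) = a ^ 2 * (a' * b') + a' ^ 2 * (a * b) := by ring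
    _ ≤ a ^ 2 * K + a' ^ 2 * K := by gcongr
    _ = K * (a ^ 2 + a' ^ 2) := by ring
    _ ≤ K * (2 * Real.cosh l * (a * a')) := by gcongr
    _ = a * a' * (2 * (K * Real.cosh l)) := by ring

/-- Concentration for Hamming-Lipschitz functions, in unnormalized form: dividing by
`(card M) ^ (2 * n)` turns the two sums into the moments `E[exp (l f)]` and `E[exp (-l f)]`. -/
lemma sum_exp_mul_sum_exp_neg_le {M : Type*} [Fintype M] [Nonempty M] [DecidableEq M]
    {l : ℝ} (hl : 0 ≤ l) :
    ∀ (n : ℕ) (f : (Fin n → M) → ℝ), (∀ r r', f r ≤ f r' + hammingDist r r') →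
      (∑ r, Real.exp (l * f r)) * (∑ r, Real.exp (-(l * f r)))
        ≤ ((Fintype.card M : ℝ) ^ 2 * Real.cosh l) ^ n := by
  intro n
  induction n with
  | zero =>
    intro f _
    simp [← Real.exp_add]
  | succ n ih =>
    intro f hf
    rw [sum_fin_succ_fun, sum_fin_succ_fun]
    set a : M → ℝ := fun x => ∑ y : Fin n → M, Real.exp (l * f (Fin.cons x y)) with ha
    set b : M → ℝ := fun x => ∑ y : Fin n → M, Real.exp (-(l * f (Fin.cons x y))) with hb
    set K : ℝ := ((Fintype.card M : ℝ) ^ 2 * Real.cosh l) ^ n with hKdef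
    have hK : 0 ≤ K := by
      have := Real.cosh_pos l
      positivity
    have hpos : ∀ x, 0 < a x := fun x =>
      Finset.sum_pos (fun y _ => Real.exp_pos _) Finset.univ_nonempty
    have hab : ∀ x, a x * b x ≤ K := fun x => by
      refine ih (fun y => f (Fin.cons x y)) (fun y y' => ?_)
      have := hf (Fin.cons x y) (Fin.cons x y')
      rw [hammingDist_cons] at this
      simpa using this
    have hrat : ∀ x x', a x ≤ Real.exp l * a x' := fun x x' => by
      rw [ha]
      simp only
      rw [Finset.mul_sum]
      refine Finset.sum_le_sum (fun y _ => ?_)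
      rw [← Real.exp_add]
      refine Real.exp_le_exp.2 ?_
      have h1 := hf (Fin.cons x y) (Fin.cons x' y)
      have h2 : ((hammingDist (Fin.cons x y : Fin (n + 1) → M) (Fin.cons x' y) : ℕ) : ℝ) ≤ 1 := by
        rw [hammingDist_cons]
        split_ifs <;> simp
      nlinarith [mul_le_mul_of_nonneg_left (h1.trans (add_le_add_right h2 _)) hl]
    have hsym : 2 * ((∑ x, a x) * ∑ x, b x) = ∑ x, ∑ x', (a x * b x' + a x' * b x) := by
      simp only [Finset.sum_add_distrib]
      rw [Finset.sum_comm (f := fun x x' => a x' * b x), ← Finset.sum_mul_sum, two_mul]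
    have hle : ∑ x, ∑ x', (a x * b x' + a x' * b x)
        ≤ ∑ _x : M, ∑ _x' : M, 2 * (K * Real.cosh l) :=
      Finset.sum_le_sum fun x _ => Finset.sum_le_sum fun x' _ =>
        cross_le (hpos x) (hpos x') (hab x) (hab x') hK (hrat x x') (hrat x' x)
    simp only [Finset.sum_const, Finset.card_univ, nsmul_eq_mul] at hle
    rw [pow_succ, ← hKdef]
    nlinarith

/-- The adversary pushing towards `!b` succeeds outside the robust set for `b`, so security
bounds the density of that set from below. -/
lemma StrongSecure.card_robustSet {ι M : Type*} [Fintype ι] [DecidableEq ι] [Fintype M]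
    [Nonempty M] [DecidableEq M] {proto : (ι → M) → Bool} {t : ℕ} {ε : ℝ}
    (h : StrongSecure proto t ε) (b : Bool) :
    ∃ S : Finset (ι → M), (∀ r ∈ S, r ∈ RobustSet proto b t) ∧
      ε * Fintype.card (ι → M) ≤ S.card := by
  classical
  let A : (ι → M) → (ι → M) := fun r =>
    if hr : ∃ r', hammingDist r r' ≤ t ∧ proto r' ≠ b then hr.choose else r
  have hA : ∀ r, hammingDist r (A r) ≤ t := fun r => by
    by_cases hr : ∃ r', hammingDist r r' ≤ t ∧ proto r' ≠ b
    · simp only [A, dif_pos hr]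
      exact hr.choose_spec.1
    · simp [A, dif_neg hr]
  have hε := h A hA b
  unfold Pr at hε
  rw [le_div_iff₀ (by exact_mod_cast Fintype.card_pos)] at hε
  refine ⟨_, fun r hr => ?_, hε⟩
  have hrb : proto (A r) = b := by
    simpa using hr
  by_contra hn
  have hn' : ∃ r', hammingDist r r' ≤ t ∧ proto r' ≠ b := by
    simpa [RobustSet] using hn
  simp only [A, dif_pos hn'] at hrb
  exact hn'.choose_spec.2 hrb

/-- The Hamming distance to a nonempty finite set, characterized by the properties needed. -/
lemma exists_dist_fun {ι M : Type*} [Fintype ι] [DecidableEq M] (S : Finset (ι → M))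
    (hS : S.Nonempty) : ∃ f : (ι → M) → ℝ, (∀ r r', f r ≤ f r' + hammingDist r r') ∧
      (∀ r ∈ S, f r = 0) ∧ ∀ r, ∃ s ∈ S, f r = hammingDist r s := by
  have hmin := fun r => S.exists_min_image (fun s => hammingDist r s) hS
  choose g hg hgle using hmin
  refine ⟨fun r => hammingDist r (g r), fun r r' => ?_, fun r hr => ?_, fun r => ⟨g r, hg r, rfl⟩⟩
  · have h1 := hgle r (g r') (hg r')
    have h2 := hammingDist_triangle r r' (g r')
    have h3 : hammingDist r (g r) ≤ hammingDist r' (g r') + hammingDist r r' := by omega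
    simp only
    exact_mod_cast h3
  · have h1 := hgle r r hr
    rw [hammingDist_self] at h1
    simp only
    exact_mod_cast Nat.le_zero.1 h1

/-- (Main theorem, non-asymptotic form.) There is a universal constant
`C > 0` such that any one-round protocol, over any finite message space, that is `ε`-secure
against `t` strong adaptive corruptions satisfies `t ≤ C·√n·(1 + log n + log(1/ε))`. -/
theorem stmt8 : ∃ C : ℝ, 0 < C ∧ ∀ n : ℕ, 2 ≤ n →
    ∀ (M : Type) (_ : Fintype M) (_ : Nonempty M) (_ : DecidableEq M),
    ∀ proto : (Fin n → M) → Bool, ∀ ε : ℝ, 0 < ε → ε < 1 → ∀ t : ℕ,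
      StrongSecure proto t ε →
        (t : ℝ) ≤ C * Real.sqrt n * (1 + Real.log n + Real.log (1 / ε)) := by
  refine ⟨2, two_pos, ?_⟩
  intro n hn M _ _ _ proto ε hε0 hε1 t hsec
  obtain ⟨S, hS, hScard⟩ := hsec.card_robustSet false
  obtain ⟨T, hT, hTcard⟩ := hsec.card_robustSet true
  set N : ℝ := (Fintype.card (Fin n → M) : ℝ) with hN
  have hNpos : 0 < N := by
    rw [hN]
    exact_mod_cast Fintype.card_pos
  have hSne : S.Nonempty := by
    rw [← Finset.card_pos]
    exact_mod_cast (mul_pos hε0 hNpos).trans_le hScard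
  obtain ⟨f, hfL, hf0, hfS⟩ := exists_dist_fun S hSne
  have hfT : ∀ r ∈ T, (t : ℝ) ≤ f r := fun r hr => by
    obtain ⟨s, hs, hfs⟩ := hfS r
    rw [hfs]
    by_contra hlt
    have hlt' : hammingDist r s < t := by exact_mod_cast not_le.1 hlt
    have h1 := hT r hr s hlt'.le
    have h2 := hS s hs s (by simp)
    simp [h1] at h2
  have hnpos : (0 : ℝ) < n := by
    exact_mod_cast (by omega : 0 < n)
  have hq : 0 < Real.sqrt n := Real.sqrt_pos.2 hnpos
  set l : ℝ := 1 / Real.sqrt n with hl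
  have hlpos : 0 < l := by positivity
  have hmain := sum_exp_mul_sum_exp_neg_le hlpos.le n f hfL
  have hplus : ε * N * Real.exp (l * t) ≤ ∑ r, Real.exp (l * f r) := by
    calc ε * N * Real.exp (l * t) ≤ T.card * Real.exp (l * t) := by gcongr
      _ = ∑ _r ∈ T, Real.exp (l * t) := by simp
      _ ≤ ∑ r ∈ T, Real.exp (l * f r) := by
        refine Finset.sum_le_sum fun r hr => Real.exp_le_exp.2 ?_
        exact mul_le_mul_of_nonneg_left (hfT r hr) hlpos.le
      _ ≤ ∑ r, Real.exp (l * f r) :=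
        Finset.sum_le_univ_sum_of_nonneg fun r => (Real.exp_pos _).le
  have hminus : ε * N ≤ ∑ r, Real.exp (-(l * f r)) := by
    calc ε * N ≤ S.card := hScard
      _ = ∑ r ∈ S, Real.exp (-(l * f r)) := by
        rw [Finset.sum_congr rfl (g := fun _ => (1 : ℝ)) (fun r hr => by simp [hf0 r hr])]
        simp
      _ ≤ ∑ r, Real.exp (-(l * f r)) :=
        Finset.sum_le_univ_sum_of_nonneg fun r => (Real.exp_pos _).le
  have hNpow : N = (Fintype.card M : ℝ) ^ n := by simp [hN]
  have hcosh : Real.cosh l ^ n ≤ Real.exp (1 / 2) := by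
    calc Real.cosh l ^ n ≤ Real.exp (l ^ 2 / 2) ^ n :=
          pow_le_pow_left₀ (Real.cosh_pos l).le (Real.cosh_le_exp_half_sq l) n
      _ = Real.exp (1 / 2) := by
        rw [← Real.exp_nat_mul, hl, div_pow, Real.sq_sqrt hnpos.le]
        congr 1
        field_simp
  have hall : ε ^ 2 * Real.exp (l * t) ≤ Real.exp (1 / 2) := by
    refine le_of_mul_le_mul_left ?_ (pow_pos hNpos 2)
    calc N ^ 2 * (ε ^ 2 * Real.exp (l * t)) = (ε * N * Real.exp (l * t)) * (ε * N) := by ring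
      _ ≤ (∑ r, Real.exp (l * f r)) * (∑ r, Real.exp (-(l * f r))) := by gcongr
      _ ≤ ((Fintype.card M : ℝ) ^ 2 * Real.cosh l) ^ n := hmain
      _ = N ^ 2 * Real.cosh l ^ n := by
        rw [hNpow, mul_pow]
        ring
      _ ≤ N ^ 2 * Real.exp (1 / 2) := by gcongr
  have hlog := Real.log_le_log (by positivity) hall
  rw [Real.log_mul (by positivity) (Real.exp_pos _).ne', Real.log_exp, Real.log_exp,
    Real.log_pow] at hlog
  push_cast at hlog
  have hlogn : 0 ≤ Real.log n := Real.log_natCast_nonneg n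
  have hinv : Real.log (1 / ε) = -Real.log ε := by rw [one_div, Real.log_inv]
  have ht : (t : ℝ) = Real.sqrt n * (l * t) := by
    rw [hl]
    field_simp
  rw [ht, mul_comm 2, mul_assoc, hinv]
  refine mul_le_mul_of_nonneg_left ?_ hq.le
  linarith
end

section
/- Let ε ∈ ℝ with 0 < ε < 1, let M : ℕ → Type be a family of nonempty finite message spaces, let Π : ∀ n, (Fin n → M n) → Bool be a family of one-round protocols, and let t : ℕ → ℕ. If for every n ≥ 1 the protocol Π n is ε-secure against t n strong adaptive corruptions, then there exist constants C > 0 and c ≥ 1 such that for all n ≥ 2, (t n : ℝ) ≤ C · Real.sqrt n · (Real.log n)^c. (Any one-round coin-flipping protocol can be secure against at most Õ(√n) strong adaptive corruptions.) -/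
open scoped BigOperators

/-- Hoeffding's lemma for the uniform distribution on a finite type, with the constant `1 / 2`
obtained by symmetrization: compare `X` with an independent copy of itself. -/
lemma expect_exp_le_one {M : Type*} [Fintype M] [Nonempty M] (X : M → ℝ) (l : ℝ)
    (hX : ∀ a b, X a ≤ X b + 1) :
    (𝔼 a, Real.exp (l * X a)) ≤ Real.exp (l ^ 2 / 2) * Real.exp (l * 𝔼 a, X a) := by
  set m := 𝔼 a, X a with hm
  have hsym : (𝔼 a, Real.exp (l * X a)) * (𝔼 b, Real.exp (-(l * X b))) ≤
      Real.exp (l ^ 2 / 2) := by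
    have h1 : (𝔼 a, Real.exp (l * X a)) * (𝔼 b, Real.exp (-(l * X b))) =
        𝔼 a, 𝔼 b, Real.exp (l * X a - l * X b) := by
      rw [Finset.expect_mul_expect]
      simp only [← Real.exp_add, sub_eq_add_neg]
    have h2 : (𝔼 a, 𝔼 b, Real.exp (l * X a - l * X b)) =
        𝔼 a, 𝔼 b, Real.exp (-(l * X a - l * X b)) := by
      rw [Finset.expect_comm]
      simp only [neg_sub]
    have h3 : (𝔼 a, 𝔼 b, Real.exp (l * X a - l * X b)) =
        𝔼 a, 𝔼 b, Real.cosh (l * X a - l * X b) := by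
      simp only [Real.cosh_eq, ← Finset.expect_div, Finset.expect_add_distrib]
      rw [← h2]
      ring
    rw [h1, h3]
    refine Finset.expect_le Finset.univ_nonempty fun a _ =>
      Finset.expect_le Finset.univ_nonempty fun b _ => ?_
    refine le_trans ?_ (Real.cosh_le_exp_half_sq l)
    rw [Real.cosh_le_cosh, ← mul_sub, abs_mul]
    have : |X a - X b| ≤ 1 := abs_le.2 ⟨by linarith [hX b a], by linarith [hX a b]⟩
    nlinarith [abs_nonneg l]
  -- Jensen's inequality, from the tangent line of `exp` at `-l m`.
  have hjen : Real.exp (-(l * m)) ≤ 𝔼 b, Real.exp (-(l * X b)) := by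
    have h1 : (𝔼 b, Real.exp (-(l * m)) * (1 + (l * m - l * X b))) = Real.exp (-(l * m)) := by
      rw [← Finset.mul_expect, Finset.expect_add_distrib, Finset.expect_sub_distrib,
        ← Finset.mul_expect Finset.univ X, ← hm]
      simp
    rw [← h1]
    refine Finset.expect_le_expect fun b _ => ?_
    have h2 : Real.exp (-(l * X b)) = Real.exp (-(l * m)) * Real.exp (l * m - l * X b) := by
      rw [← Real.exp_add]; congr 1; ring
    rw [h2]
    gcongr
    linarith [Real.add_one_le_exp (l * m - l * X b)]
  have hpos : 0 ≤ 𝔼 a, Real.exp (l * X a) := Finset.expect_nonneg fun a _ => (Real.exp_pos _).le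
  have h4 := (mul_le_mul_of_nonneg_left hjen hpos).trans hsym
  rw [Real.exp_neg, ← div_eq_mul_inv, div_le_iff₀ (Real.exp_pos _)] at h4
  exact h4

lemma expect_cons {M : Type*} [Fintype M] {n : ℕ} (f : (Fin (n + 1) → M) → ℝ) :
    (𝔼 x, f x) = 𝔼 x : Fin n → M, 𝔼 a : M, f (Fin.cons a x) := by
  rw [Finset.expect_comm, ← Finset.expect_product', Finset.univ_product_univ]
  exact (Fintype.expect_equiv (Fin.consEquiv fun _ => M) _ _ fun _ => rfl).symm

/-- Moment bound behind McDiarmid's inequality, by induction on `n`: averaging over one coordinate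
costs a factor `exp (l² / 2)` and leaves a function with bounded differences in the others. -/
lemma expect_exp_le {M : Type*} [Fintype M] [Nonempty M] (l : ℝ) (n : ℕ) :
    ∀ f : (Fin n → M) → ℝ, (∀ x i v, f (Function.update x i v) ≤ f x + 1) →
    (𝔼 x, Real.exp (l * f x)) ≤ Real.exp (l ^ 2 / 2) ^ n * Real.exp (l * 𝔼 x, f x) := by
  induction n with
  | zero =>
    intro f _
    simp
  | succ n ih =>
    intro f hf
    have hg : ∀ (x : Fin n → M) (i : Fin n) (v : M),
        (𝔼 a, f (Fin.cons a (Function.update x i v))) ≤ (𝔼 a, f (Fin.cons a x)) + 1 := by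
      intro x i v
      have h1 : (𝔼 a, f (Fin.cons a x)) + 1 = 𝔼 a, (f (Fin.cons a x) + 1) := by
        rw [Finset.expect_add_distrib, Fintype.expect_const]
      rw [h1]
      refine Finset.expect_le_expect fun a _ => ?_
      rw [Fin.cons_update]
      exact hf _ _ _
    have key := ih (fun x => 𝔼 a, f (Fin.cons a x)) hg
    rw [expect_cons, expect_cons f, pow_succ']
    calc (𝔼 x : Fin n → M, 𝔼 a : M, Real.exp (l * f (Fin.cons a x)))
        ≤ 𝔼 x : Fin n → M, Real.exp (l ^ 2 / 2) * Real.exp (l * 𝔼 a, f (Fin.cons a x)) := by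
          refine Finset.expect_le_expect fun x _ => expect_exp_le_one _ l fun a b => ?_
          have := hf (Fin.cons b x) 0 a
          rwa [Fin.update_cons_zero] at this
      _ ≤ _ := by
          rw [← Finset.mul_expect, mul_assoc]
          gcongr

/-- Markov's inequality for `Pr`. -/
lemma Pr_mul_le {α : Type*} [Fintype α] (P : α → Prop) (g : α → ℝ) (c : ℝ)
    (hg : ∀ x, 0 ≤ g x) (hP : ∀ x, P x → c ≤ g x) : Pr P * c ≤ 𝔼 x, g x := by
  classical
  rw [Fintype.expect_eq_sum_div_card]
  unfold Pr
  rw [div_mul_eq_mul_div]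
  refine div_le_div_of_nonneg_right ?_ (Nat.cast_nonneg _)
  calc _ = ∑ x ∈ Finset.univ.filter P, c := by
        rw [Finset.sum_const, nsmul_eq_mul]
    _ ≤ ∑ x ∈ Finset.univ.filter P, g x := Finset.sum_le_sum fun x hx => hP x (by simpa using hx)
    _ ≤ _ := Finset.sum_le_sum_of_subset_of_nonneg (Finset.subset_univ _) fun x _ _ => hg x

/-- Each outcome's robust set has probability at least `ε` in a secure protocol. -/
lemma le_Pr_robust {ι M : Type*} [Fintype ι] [DecidableEq ι] [Fintype M] [DecidableEq M]
    {proto : (ι → M) → Bool} {t : ℕ} {ε : ℝ} (h : StrongSecure proto t ε) (b : Bool) :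
    ε ≤ Pr (fun r => r ∈ RobustSet proto b t) := by
  classical
  -- The adversary that avoids `b` whenever it can.
  have hA : ∀ r, ∃ r', hammingDist r r' ≤ t ∧ (proto r' = b → r ∈ RobustSet proto b t) := by
    intro r
    by_cases hr : r ∈ RobustSet proto b t
    · exact ⟨r, by simp, fun _ => hr⟩
    · have hr' := hr
      simp only [RobustSet, Set.mem_ofPred_eq, not_forall] at hr'
      obtain ⟨r', h1, h2⟩ := hr'
      exact ⟨r', h1, fun h3 => absurd h3 h2⟩
  choose A hA1 hA2 using hA
  refine (h A hA1 b).trans ?_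
  unfold Pr
  refine div_le_div_of_nonneg_right ?_ (Nat.cast_nonneg _)
  exact_mod_cast Finset.card_le_card fun r hr => by
    simp only [Finset.mem_filter, Finset.mem_univ, true_and] at hr ⊢
    exact hA2 r hr

/-- Two sets of probability at least `ε` at distance at least `t` force `ε² exp (l t) ≤ exp (n l²)`
for every `l ≥ 0`. -/
lemma dist_bound {M : Type*} [Fintype M] [Nonempty M] [DecidableEq M] {n t : ℕ} {ε l : ℝ}
    (hε : 0 < ε) (hl : 0 ≤ l) (P Q : (Fin n → M) → Prop) (hP : ε ≤ Pr P) (hQ : ε ≤ Pr Q)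
    (hPQ : ∀ x y, P x → Q y → t ≤ hammingDist y x) :
    ε ^ 2 * Real.exp (l * t) ≤ Real.exp (n * l ^ 2) := by
  classical
  have hne : (Finset.univ.filter P).Nonempty := by
    by_contra hcon
    rw [Finset.not_nonempty_iff_eq_empty] at hcon
    have : Pr P = 0 := by
      unfold Pr
      rw [div_eq_zero_iff]; left
      rw [Nat.cast_eq_zero, Finset.card_eq_zero, ← hcon]
    linarith
  set d : (Fin n → M) → ℕ := fun x => (Finset.univ.filter P).inf' hne (hammingDist x) with hd
  have hdP : ∀ x, P x → d x = 0 := by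
    intro x hx
    have : d x ≤ hammingDist x x := Finset.inf'_le _ (by simpa using hx)
    simpa using this
  have hdQ : ∀ y, Q y → t ≤ d y := fun y hy =>
    Finset.le_inf' _ _ fun x hx => hPQ x y (by simpa using hx) hy
  have hupd : ∀ (x : Fin n → M) i v, hammingDist (Function.update x i v) x ≤ 1 := by
    intro x i v
    unfold hammingDist
    rw [← Finset.card_singleton i]
    refine Finset.card_le_card fun j hj => ?_
    simp only [Finset.mem_filter, Finset.mem_univ, true_and, Finset.mem_singleton] at hj ⊢
    by_contra hji
    exact hj (Function.update_of_ne hji _ _)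
  have hlip : ∀ x i v, (d (Function.update x i v) : ℝ) ≤ d x + 1 := by
    intro x i v
    obtain ⟨a, ha, hax⟩ := Finset.exists_mem_eq_inf' hne (hammingDist x)
    have h1 : d (Function.update x i v) ≤ hammingDist (Function.update x i v) a :=
      Finset.inf'_le _ ha
    have h2 := hammingDist_triangle (Function.update x i v) x a
    have h3 := hupd x i v
    have h4 : d x = hammingDist x a := hax
    exact_mod_cast (by omega : d (Function.update x i v) ≤ d x + 1)
  have e1 := expect_exp_le l n (fun x => (d x : ℝ)) hlip
  have e2 := expect_exp_le (-l) n (fun x => (d x : ℝ)) hlip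
  have m1 := Pr_mul_le Q (fun x => Real.exp (l * d x)) (Real.exp (l * t))
    (fun x => (Real.exp_pos _).le) (fun y hy => by
      have : (t : ℝ) ≤ d y := by exact_mod_cast hdQ y hy
      gcongr)
  have m2 := Pr_mul_le P (fun x => Real.exp (-l * d x)) 1
    (fun x => (Real.exp_pos _).le) (fun y hy => by simp [hdP y hy])
  set m := 𝔼 x, (d x : ℝ)
  have f1 : ε * Real.exp (l * t) ≤ Real.exp (l ^ 2 / 2) ^ n * Real.exp (l * m) :=
    (mul_le_mul_of_nonneg_right hQ (Real.exp_pos _).le).trans (m1.trans e1)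
  have f2 : ε ≤ Real.exp (l ^ 2 / 2) ^ n * Real.exp (-l * m) := by
    have := e2
    rw [neg_sq] at this
    linarith
  have f3 := mul_le_mul f1 f2 hε.le (by positivity)
  calc ε ^ 2 * Real.exp (l * t) = ε * Real.exp (l * t) * ε := by ring
    _ ≤ _ := f3
    _ = Real.exp (n * l ^ 2) := by
      rw [← Real.exp_nat_mul, ← Real.exp_add, ← Real.exp_add, ← Real.exp_add]
      congr 1; ring

/-- (Main theorem, asymptotic form.) Any family of one-round protocols
that is `ε`-secure against `t n` strong adaptive corruptions satisfies
`t n ≤ C·√n·(log n)^c` for some constants `C > 0`, `c ≥ 1`. -/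
theorem stmt9 {ε : ℝ} (hε0 : 0 < ε) (hε1 : ε < 1)
    (M : ℕ → Type) [∀ n, Fintype (M n)] [∀ n, Nonempty (M n)] [∀ n, DecidableEq (M n)]
    (proto : ∀ n, (Fin n → M n) → Bool) (t : ℕ → ℕ)
    (h : ∀ n, 1 ≤ n → StrongSecure (proto n) (t n) ε) :
    ∃ C c : ℝ, 0 < C ∧ 1 ≤ c ∧ ∀ n : ℕ, 2 ≤ n →
      (t n : ℝ) ≤ C * Real.sqrt n * Real.log n ^ c := by
  have hlog : Real.log ε < 0 := Real.log_neg hε0 hε1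
  -- The factor `2` absorbs `log n ≥ log 2 > 1 / 2`.
  refine ⟨2 * (1 - 2 * Real.log ε), 1, by linarith, le_rfl, fun n hn => ?_⟩
  have hs := h n (by omega)
  have hn' : (2 : ℝ) ≤ n := by exact_mod_cast hn
  have hsq : 0 < Real.sqrt n := Real.sqrt_pos.2 (by linarith)
  have key := dist_bound (l := 1 / Real.sqrt n) (t := t n) hε0 (by positivity) _ _
    (le_Pr_robust hs true) (le_Pr_robust hs false) (fun x y hx hy => by
      by_contra! hlt
      have h1 := hy x hlt.le
      have h2 := hx x (by simp)
      simp [h1] at h2)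
  have hnl : (n : ℝ) * (1 / Real.sqrt n) ^ 2 = 1 := by
    rw [div_pow, Real.sq_sqrt (by linarith)]
    field_simp
  rw [hnl] at key
  have h1 : ε ^ 2 = Real.exp (2 * Real.log ε) := by
    rw [two_mul, Real.exp_add, Real.exp_log hε0]; ring
  rw [h1, ← Real.exp_add, Real.exp_le_exp] at key
  have h2 : (t n : ℝ) ≤ (1 - 2 * Real.log ε) * Real.sqrt n := by
    rw [← div_le_iff₀ hsq]
    have : 1 / Real.sqrt n * (t n : ℝ) = t n / Real.sqrt n := by ring
    linarith
  have h3 : 1 / 2 ≤ Real.log n := by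
    have := Real.log_le_log (by norm_num) hn'
    linarith [Real.log_two_gt_d9]
  rw [Real.rpow_one]
  have h4 : 0 < (1 - 2 * Real.log ε) * Real.sqrt n := mul_pos (by linarith) hsq
  nlinarith
end
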